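/- Let (λ_n) be a sequence of complex numbers with Re λ_n → +∞ and Im λ_n → ν for some ν > 0. Then S(λ_n) → 0 as n → ∞. (This is Theorem 2 of the paper — decay of the scattering matrix in strips separated from the real line — in the case of the modular surface, where the scattering coefficient is given by the explicit zeta-quotient formula.) -/

import Mathlib

/-!
Put `w = -iλ`, so that `re w = im λ` and `|im w| = |re λ|`, and
`S = √π ζ(2w) Γ(w) / (ζ(1 + 2w) Γ(w + 1/2))`. Since `re (1 + 2w)` stays above some `σ > 1`, the
factor `1 / ζ(1 + 2w)` is the Dirichlet series of the Möbius function and is bounded. It remains to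
see that `ζ(2w) Γ(w) / Γ(w + 1/2)` decays like a negative power of `|im w|`. This is a convexity
bound.

Let `Ξ(w) = w (w - 1/2) Λ(2w)` (`xiHalf`), with `Λ` the completed zeta function. It is entire, and
`Ξ(w) / Γ(w + 1/2)` equals `w (w - 1/2) ζ(2w) Γ(w) / Γ(w + 1/2)` up to the factor `π ^ (-w)`.
On `re w = n + 1`, where `ζ(2w)` is bounded, it is `O(|im w| ^ (2 - 1/2))`. On `re w = -δ`, the
functional equation and the boundedness of `ζ(1 - 2w)` give `O(|im w| ^ (2 + 2δ))`. Linear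
interpolation of the exponents (`three_lines_poly`) gives `O(|im w| ^ (2 - κ))` with `κ > 0` for
`re w ≥ μ > 0`, provided `δ` is small compared with `μ`; dividing by `w (w - 1/2)` leaves
`O(|im w| ^ (-κ))` (`Smat_power_decay`).

The estimates of Gamma quotients avoid Stirling's formula: on `re w = n + 1` the reflection formula
gives explicit moduli, and on `re w = -δ` the quotient `Γ(1/2 - w) / Γ(1/2 + w)` is itself handled by
interpolation between `re w = -1/2` and `re w = 0`, where its modulus is `|im w|` and `1`.
-/

open Complex Filter Topology

/-- The scattering coefficient of the modular surface:
`S(λ) = √π · ζ(−2iλ)Γ(−iλ) / (ζ(1−2iλ)Γ(1/2−iλ))`. -/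
noncomputable def Smat (l : ℂ) : ℂ :=
  (Real.sqrt Real.pi : ℂ) * riemannZeta (-2 * Complex.I * l) * Complex.Gamma (-Complex.I * l)
    / (riemannZeta (1 - 2 * Complex.I * l) * Complex.Gamma (1 / 2 - Complex.I * l))

/-! ### Bounds in vertical strips -/

lemma mellin_bounded_on_strip {f : ℝ → ℂ} {a b : ℝ} (ha : MellinConvergent f a)
    (hb : MellinConvergent f b) :
    ∃ C, ∀ s : ℂ, a ≤ s.re → s.re ≤ b → ‖mellin f s‖ ≤ C := by
  refine ⟨∫ t in Set.Ioi (0 : ℝ),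
    (‖(t : ℂ) ^ ((a : ℂ) - 1) • f t‖ + ‖(t : ℂ) ^ ((b : ℂ) - 1) • f t‖), fun s h1 h2 => ?_⟩
  unfold mellin
  refine MeasureTheory.norm_integral_le_of_norm_le (ha.norm.add hb.norm) ?_
  filter_upwards [MeasureTheory.ae_restrict_mem measurableSet_Ioi] with t ht
  have ht : 0 < t := ht
  simp only [norm_smul, Complex.norm_cpow_eq_rpow_re_of_pos ht, ← add_mul]
  refine mul_le_mul_of_nonneg_right ?_ (norm_nonneg _)
  simp only [sub_re, one_re, ofReal_re]
  have p1 := Real.rpow_nonneg ht.le (a - 1)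
  have p2 := Real.rpow_nonneg ht.le (b - 1)
  rcases le_total 1 t with h | h
  · linarith [Real.rpow_le_rpow_of_exponent_le h (by linarith : s.re - 1 ≤ b - 1)]
  · linarith [Real.rpow_le_rpow_of_exponent_ge ht h (by linarith : a - 1 ≤ s.re - 1)]

lemma completedZeta₀_bounded_on_strip (a b : ℝ) :
    ∃ C, ∀ s : ℂ, a ≤ s.re → s.re ≤ b → ‖completedRiemannZeta₀ s‖ ≤ C := by
  have hc : ∀ s, MellinConvergent (HurwitzZeta.hurwitzEvenFEPair 0).f_modif s := fun s =>
    ((HurwitzZeta.hurwitzEvenFEPair 0).isStrongFEPair_toStrongFEPair.hasMellin s).1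
  obtain ⟨C, hC⟩ := mellin_bounded_on_strip (hc ((a / 2 : ℝ) : ℂ)) (hc ((b / 2 : ℝ) : ℂ))
  refine ⟨C / 2, fun s h1 h2 => ?_⟩
  have : completedRiemannZeta₀ s = mellin (HurwitzZeta.hurwitzEvenFEPair 0).f_modif (s / 2) / 2 :=
    rfl
  rw [this, norm_div, Complex.norm_ofNat]
  have h3 : (s / 2).re = s.re / 2 := by simp
  gcongr
  exact hC _ (by rw [h3]; linarith) (by rw [h3]; linarith)

lemma Gamma_bounded_on_strip {a b : ℝ} (ha : 0 < a) (hab : a ≤ b) :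
    ∃ C, ∀ s : ℂ, a ≤ s.re → s.re ≤ b → ‖Complex.Gamma s‖ ≤ C := by
  have hc : ∀ s : ℂ, 0 < s.re → MellinConvergent (fun x : ℝ => ((-x).exp : ℂ)) s := fun s hs => by
    have := Complex.GammaIntegral_convergent hs
    simpa [MellinConvergent, mul_comm] using this
  obtain ⟨C, hC⟩ := mellin_bounded_on_strip (hc (a : ℂ) (by simpa)) (hc (b : ℂ) (by simp; linarith))
  refine ⟨C, fun s h1 h2 => ?_⟩
  rw [Complex.Gamma_eq_integral (by linarith), Complex.GammaIntegral_eq_mellin]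
  convert hC s h1 h2 using 4

lemma norm_sin_le_exp (z : ℂ) : ‖Complex.sin z‖ ≤ Real.exp |z.im| := by
  have h1 : Real.exp z.im ≤ Real.exp |z.im| := Real.exp_le_exp.2 (le_abs_self _)
  have h2 : Real.exp (-z.im) ≤ Real.exp |z.im| := Real.exp_le_exp.2 (neg_le_abs _)
  unfold Complex.sin
  rw [norm_div, norm_mul, Complex.norm_I, Complex.norm_ofNat, mul_one]
  have h3 := norm_sub_le (Complex.exp (-z * I)) (Complex.exp (z * I))
  have h4 : ‖Complex.exp (-z * I)‖ = Real.exp z.im := by simp [Complex.norm_exp]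
  have h5 : ‖Complex.exp (z * I)‖ = Real.exp (-z.im) := by simp [Complex.norm_exp]
  linarith

/-- The bound is first obtained for `-1 ≤ re u ≤ 0` from the reflection formula and then moved to the
right with `Γ(u) = (u - 1) Γ(u - 1)`. -/
lemma inv_Gamma_growth (m : ℕ) :
    ∃ C, ∀ u : ℂ, -1 ≤ u.re → u.re ≤ m → 1 ≤ |u.im| →
      ‖(Complex.Gamma u)⁻¹‖ ≤ C * Real.exp (Real.pi * |u.im|) := by
  induction m with
  | zero =>
    obtain ⟨C, hC⟩ := Gamma_bounded_on_strip (a := 1) (b := 2) one_pos (by norm_num)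
    refine ⟨C / Real.pi, fun u h1 h2 h3 => ?_⟩
    have h4 := Complex.Gamma_mul_Gamma_one_sub u
    have hb := hC (1 - u) (by simp at h2 ⊢; linarith) (by simp; linarith)
    have hne : Complex.Gamma (1 - u) ≠ 0 :=
      Complex.Gamma_ne_zero_of_re_pos (by simp at h2 ⊢; linarith)
    have hu : ∀ n : ℕ, u ≠ -n := fun n hn => by
      rw [hn] at h3; norm_num at h3
    have hne' := Complex.Gamma_ne_zero hu
    have hsin : Complex.sin (Real.pi * u) ≠ 0 := by
      intro h; rw [h, div_zero] at h4; exact mul_ne_zero hne' hne h4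
    have hpi : (Real.pi : ℂ) ≠ 0 := by exact_mod_cast Real.pi_ne_zero
    have h5 : (Complex.Gamma u)⁻¹ = Complex.Gamma (1 - u) * Complex.sin (Real.pi * u) / Real.pi := by
      refine inv_eq_of_mul_eq_one_right ?_
      rw [← mul_div_assoc, ← mul_assoc, h4]
      field_simp
    have h6 := norm_sin_le_exp (Real.pi * u)
    have h7 : ((Real.pi : ℂ) * u).im = Real.pi * u.im := by simp
    rw [h7, abs_mul, abs_of_pos Real.pi_pos] at h6
    rw [h5, norm_div, norm_mul, Complex.norm_real, Real.norm_of_nonneg Real.pi_pos.le,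
      div_mul_eq_mul_div]
    have hC0 : 0 ≤ C := (norm_nonneg _).trans hb
    gcongr
  | succ m ih =>
    obtain ⟨C, hC⟩ := ih
    refine ⟨C, fun u h1 h2 h3 => ?_⟩
    rcases le_total u.re m with h | h
    · exact hC u h1 h h3
    · have h4 : 1 ≤ ‖u - 1‖ := h3.trans (by simpa using Complex.abs_im_le_norm (u - 1))
      have h5 : Complex.Gamma u = (u - 1) * Complex.Gamma (u - 1) := by
        rw [← Complex.Gamma_add_one _ (norm_pos_iff.1 (by linarith)), sub_add_cancel]
      have h6 := hC (u - 1) (by simp; linarith [(Nat.cast_nonneg m : (0:ℝ) ≤ m)])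
        (by push_cast at h2; simp; linarith) (by simpa using h3)
      simp only [sub_im, one_im, sub_zero] at h6
      rw [h5, mul_inv, norm_mul]
      refine le_trans (mul_le_of_le_one_left (norm_nonneg _) ?_) h6
      rw [norm_inv]
      exact inv_le_one_of_one_le₀ h4

/-! ### Interpolation of polynomial growth -/

open Complex.HadamardThreeLines in
/-- A three lines theorem for polynomial growth: if `F` has at most exponential growth in a vertical
strip and grows like `|im z| ^ p` and `|im z| ^ q` on its two edges, then the growth exponent inside
is at most the linear interpolation of `p` and `q`. For the bound at height `R`, Hadamard's theorem is
applied to `F(z + iR) exp(z ^ 2)`, whose Gaussian decay localises to `im z` near `0`. -/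
lemma three_lines_poly {F : ℂ → ℂ} {α β A p q : ℝ} (hαβ : α < β) (hp : 0 ≤ p) (hq : 0 ≤ q)
    (hd : ∀ z : ℂ, α ≤ z.re → z.re ≤ β → DifferentiableAt ℂ F z)
    (hgrow : ∃ C, ∀ z : ℂ, α ≤ z.re → z.re ≤ β → 1 ≤ |z.im| →
      ‖F z‖ ≤ C * Real.exp (A * |z.im|))
    (hl : ∃ C, ∀ z : ℂ, z.re = α → 1 ≤ |z.im| → ‖F z‖ ≤ C * (1 + |z.im|) ^ p)
    (hr : ∃ C, ∀ z : ℂ, z.re = β → 1 ≤ |z.im| → ‖F z‖ ≤ C * (1 + |z.im|) ^ q) :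
    ∃ C, 0 < C ∧ ∀ z : ℂ, α ≤ z.re → z.re ≤ β → ‖F z‖ ≤ C *
      (1 + |z.im|) ^ (p * (1 - (z.re - α) / (β - α)) + q * ((z.re - α) / (β - α))) := by
  obtain ⟨C₁, h₁⟩ := hgrow
  obtain ⟨C₂, h₂⟩ := hl
  obtain ⟨C₃, h₃⟩ := hr
  -- On the compact part `|im z| ≤ 1` of the strip, `F` is bounded by continuity.
  obtain ⟨C₀, h₀⟩ : ∃ C, ∀ z ∈ Set.Icc α β ×ℂ Set.Icc (-1 : ℝ) 1, ‖F z‖ ≤ C := by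
    refine (isCompact_Icc.reProdIm isCompact_Icc).exists_bound_of_continuousOn fun z hz => ?_
    rw [Complex.mem_reProdIm] at hz
    exact (hd z hz.1.1 hz.1.2).continuousAt.continuousWithinAt
  set K : ℝ := max 1 (max (max C₀ C₁) (max C₂ C₃)) with hK
  have hK1 : 1 ≤ K := le_max_left _ _
  have hK0 : 0 < K := by linarith
  have k0 : C₀ ≤ K := by simp [hK]
  have k1 : C₁ ≤ K := by simp [hK]
  have k2 : C₂ ≤ K := by simp [hK]
  have k3 : C₃ ≤ K := by simp [hK]
  have small : ∀ z : ℂ, α ≤ z.re → z.re ≤ β → |z.im| ≤ 1 → ‖F z‖ ≤ K := fun z a b c =>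
    (h₀ z (by rw [Complex.mem_reProdIm]; exact ⟨⟨a, b⟩, abs_le.1 c⟩)).trans k0
  have pw : ∀ (y r : ℝ), 0 ≤ r → 1 ≤ (1 + |y|) ^ r := fun y r hr0 =>
    Real.one_le_rpow (by linarith [abs_nonneg y]) hr0
  have hG : ∀ z : ℂ, α ≤ z.re → z.re ≤ β → ‖F z‖ ≤ K * Real.exp (|A| * |z.im|) := by
    intro z a b
    rcases le_total 1 |z.im| with c | c
    · refine (h₁ z a b c).trans ?_
      gcongr
      exact le_abs_self A
    · exact (small z a b c).trans (le_mul_of_one_le_right hK0.le (Real.one_le_exp (by positivity)))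
  have hL : ∀ z : ℂ, z.re = α → ‖F z‖ ≤ K * (1 + |z.im|) ^ p := by
    intro z a
    rcases le_total 1 |z.im| with c | c
    · refine (h₂ z a c).trans ?_
      gcongr
    · exact (small z a.ge (by linarith) c).trans (le_mul_of_one_le_right hK0.le (pw _ _ hp))
  have hR : ∀ z : ℂ, z.re = β → ‖F z‖ ≤ K * (1 + |z.im|) ^ q := by
    intro z a
    rcases le_total 1 |z.im| with c | c
    · refine (h₃ z a c).trans ?_
      gcongr
    · exact (small z (by linarith) a.le c).trans (le_mul_of_one_le_right hK0.le (pw _ _ hq))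
  set M : ℝ := α ^ 2 + β ^ 2 with hM
  have gauss : ∀ z : ℂ, α ≤ z.re → z.re ≤ β →
      ‖Complex.exp (z ^ 2)‖ ≤ Real.exp (M - z.im ^ 2) := by
    intro z a b
    rw [Complex.norm_exp, Real.exp_le_exp]
    have : (z ^ 2).re = z.re ^ 2 - z.im ^ 2 := by simp [pow_two]
    rw [this]
    have : z.re ^ 2 ≤ α ^ 2 + β ^ 2 := by
      rcases le_total 0 z.re with h | h <;> nlinarith
    linarith
  have quad : ∀ (c y : ℝ), Real.exp (c * |y|) * Real.exp (M - y ^ 2) ≤ Real.exp (M + c ^ 2) := by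
    intro c y
    rw [← Real.exp_add, Real.exp_le_exp, ← sq_abs y]
    nlinarith [sq_nonneg (c - |y| / 2), sq_nonneg |y|, sq_nonneg (c - |y|), sq_nonneg c]
  -- `(1 + |y + R|) ^ r` is at most `exp (r |y|) (1 + |R|) ^ r`, and the Gaussian absorbs `exp (r |y|)`.
  have edge : ∀ (r R : ℝ), 0 ≤ r → ∀ z : ℂ, α ≤ z.re → z.re ≤ β →
      ‖F (z + R * I)‖ ≤ K * (1 + |z.im + R|) ^ r →
      ‖F (z + R * I) * Complex.exp (z ^ 2)‖ ≤ K * Real.exp (M + r ^ 2) * (1 + |R|) ^ r := by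
    intro r R hr0 z a b hz
    have e1 : (1 + |z.im + R|) ^ r ≤ Real.exp (r * |z.im|) * (1 + |R|) ^ r := by
      have : 1 + |z.im + R| ≤ Real.exp |z.im| * (1 + |R|) := by
        have := abs_add_le z.im R
        have := Real.add_one_le_exp |z.im|
        nlinarith [abs_nonneg R, abs_nonneg z.im]
      calc (1 + |z.im + R|) ^ r ≤ (Real.exp |z.im| * (1 + |R|)) ^ r := by gcongr
        _ = _ := by
          rw [Real.mul_rpow (Real.exp_pos _).le (by positivity), ← Real.exp_mul, mul_comm r]
    rw [norm_mul]
    calc _ ≤ (K * (Real.exp (r * |z.im|) * (1 + |R|) ^ r)) * Real.exp (M - z.im ^ 2) := by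
          gcongr
          · exact hz.trans (by gcongr)
          · exact gauss z a b
      _ = K * (Real.exp (r * |z.im|) * Real.exp (M - z.im ^ 2)) * (1 + |R|) ^ r := by ring
      _ ≤ _ := by gcongr; exact quad _ _
  set D : ℝ := K * Real.exp (M + (p + q) ^ 2) with hD
  have hD0 : 0 < D := by positivity
  refine ⟨D, by positivity, fun z ha hb => ?_⟩
  set R := z.im with hRdef
  have shift_re : ∀ w : ℂ, (w + R * I).re = w.re := fun w => by simp
  have shift_im : ∀ w : ℂ, (w + R * I).im = w.im + R := fun w => by simp
  have key := norm_le_interp_of_mem_verticalClosedStrip'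
    (f := fun w => F (w + R * I) * Complex.exp (w ^ 2)) (z := (z.re : ℂ)) (l := α) (u := β)
    (a := D * (1 + |R|) ^ p) (b := D * (1 + |R|) ^ q) hαβ
    (by simp [verticalClosedStrip, ha, hb]) ?_ ?_ ?_ ?_
  · have hz : (z.re : ℂ) + R * I = z := Complex.re_add_im z
    simp only [hz, ofReal_re] at key
    set θ := (z.re - α) / (β - α) with hθ
    have e : ‖F z‖ ≤ ‖F z * Complex.exp ((z.re : ℂ) ^ 2)‖ := by
      rw [norm_mul]
      refine le_mul_of_one_le_right (norm_nonneg _) ?_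
      rw [Complex.norm_exp]
      refine Real.one_le_exp ?_
      norm_cast
      positivity
    refine e.trans (key.trans (le_of_eq ?_))
    have hb0 : 0 < 1 + |R| := by positivity
    rw [Real.mul_rpow hD0.le (by positivity), Real.mul_rpow hD0.le (by positivity),
      ← Real.rpow_mul hb0.le, ← Real.rpow_mul hb0.le, Real.rpow_add hb0,
      mul_mul_mul_comm, ← Real.rpow_add hD0]
    simp
  · have hsub : closure (verticalStrip α β) ⊆ {w : ℂ | α ≤ w.re ∧ w.re ≤ β} :=
      closure_minimal (fun w hw => ⟨hw.1.le, hw.2.le⟩)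
        ((isClosed_le continuous_const Complex.continuous_re).inter
          (isClosed_le Complex.continuous_re continuous_const))
    refine DifferentiableOn.diffContOnCl fun w hw => DifferentiableAt.differentiableWithinAt ?_
    have := hd (w + R * I) (by rw [shift_re]; exact (hsub hw).1) (by rw [shift_re]; exact (hsub hw).2)
    exact DifferentiableAt.mul (this.comp w (by fun_prop)) (by fun_prop)
  · refine ⟨K * Real.exp (|A| * |R|) * Real.exp (M + |A| ^ 2), ?_⟩
    rintro _ ⟨w, hw, rfl⟩
    have hw1 : α ≤ w.re := hw.1
    have hw2 : w.re ≤ β := hw.2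
    have g := hG (w + R * I) (by rwa [shift_re]) (by rwa [shift_re])
    rw [shift_im] at g
    have e1 : Real.exp (|A| * |w.im + R|) ≤ Real.exp (|A| * |R|) * Real.exp (|A| * |w.im|) := by
      rw [← Real.exp_add, Real.exp_le_exp]
      nlinarith [abs_add_le w.im R, abs_nonneg A]
    simp only [Function.comp_apply, norm_mul]
    calc _ ≤ (K * (Real.exp (|A| * |R|) * Real.exp (|A| * |w.im|))) * Real.exp (M - w.im ^ 2) := by
          gcongr
          · exact g.trans (by gcongr)
          · exact gauss w hw1 hw2
      _ = K * Real.exp (|A| * |R|) * (Real.exp (|A| * |w.im|) * Real.exp (M - w.im ^ 2)) := by ring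
      _ ≤ _ := by gcongr; exact quad _ _
  · intro w hw
    have hw : w.re = α := hw
    refine (edge p R hp w hw.ge (by linarith) ?_).trans ?_
    · have := hL (w + R * I) (by rwa [shift_re])
      rwa [shift_im] at this
    · rw [hD]; gcongr; linarith
  · intro w hw
    have hw : w.re = β := hw
    refine (edge q R hq w (by linarith) hw.le ?_).trans ?_
    · have := hR (w + R * I) (by rwa [shift_re])
      rwa [shift_im] at this
    · rw [hD]; gcongr; linarith

/-! ### Zeta and Gamma quotients on vertical lines -/

lemma LSeries_bounded {f : ℕ → ℂ} (hf : ∀ n, ‖f n‖ ≤ 1) {σ : ℝ} (hσ : 1 < σ) :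
    ∃ C, ∀ s : ℂ, σ ≤ s.re → ‖LSeries f s‖ ≤ C := by
  have hs : LSeriesSummable (1 : ℕ → ℂ) (σ : ℂ) := LSeriesSummable_one_iff.2 (by simpa)
  refine ⟨∑' n, ‖LSeries.term (1 : ℕ → ℂ) (σ : ℂ) n‖, fun s h => ?_⟩
  refine tsum_of_norm_bounded hs.norm.hasSum fun n => ?_
  exact (LSeries.norm_term_le s (g := (1 : ℕ → ℂ)) (by simpa using hf n)).trans
    (LSeries.norm_term_le_of_re_le_re _ (by simpa using h) n)

lemma zeta_bounded {σ : ℝ} (hσ : 1 < σ) :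
    ∃ C, ∀ s : ℂ, σ ≤ s.re → ‖riemannZeta s‖ ≤ C := by
  obtain ⟨C, hC⟩ := LSeries_bounded (f := (1 : ℕ → ℂ)) (by simp) hσ
  refine ⟨C, fun s h => ?_⟩
  rw [← LSeries_one_eq_riemannZeta (by linarith)]
  exact hC s h

lemma inv_zeta_bounded {σ : ℝ} (hσ : 1 < σ) :
    ∃ C, ∀ s : ℂ, σ ≤ s.re → ‖(riemannZeta s)⁻¹‖ ≤ C := by
  obtain ⟨C, hC⟩ := LSeries_bounded (f := fun n => (ArithmeticFunction.moebius n : ℂ))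
    (fun n => by
      rw [Complex.norm_intCast]
      exact_mod_cast ArithmeticFunction.abs_moebius_le_one) hσ
  refine ⟨C, fun s h => ?_⟩
  have h1 := LSeries_one_mul_Lseries_moebius (s := s) (by linarith)
  rw [LSeries_one_eq_riemannZeta (by linarith)] at h1
  rw [← eq_inv_of_mul_eq_one_right h1]
  exact hC s h

lemma norm_Gamma_conj (s : ℂ) : ‖Complex.Gamma ((starRingEnd ℂ) s)‖ = ‖Complex.Gamma s‖ := by
  rw [Complex.Gamma_conj, Complex.norm_conj]

/-- On the lines `re z = 0` and `re z = -1/2` the modulus of the quotient is exactly `1` and `|im z|`;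
in between, the exponent is interpolated linearly. -/
lemma Gamma_quotient_left {δ : ℝ} (h0 : 0 ≤ δ) (h1 : δ ≤ 1 / 2) :
    ∃ C, ∀ z : ℂ, z.re = -δ →
      ‖Complex.Gamma (1 / 2 - z) * (Complex.Gamma (1 / 2 + z))⁻¹‖ ≤ C * (1 + |z.im|) ^ (2 * δ) := by
  have key := three_lines_poly
    (F := fun z => Complex.Gamma (1 / 2 - z) * (Complex.Gamma (1 / 2 + z))⁻¹)
    (α := -(1 / 2)) (β := 0) (A := Real.pi) (p := 1) (q := 0) (by norm_num) (by norm_num)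
    (by norm_num) ?_ ?_ ?_ ?_
  · obtain ⟨C, -, hC⟩ := key
    refine ⟨C, fun z hz => (hC z (by linarith) (by linarith)).trans (le_of_eq ?_)⟩
    rw [hz]
    congr 2
    ring
  · intro z ha hb
    have g1 : DifferentiableAt ℂ Complex.Gamma (1 / 2 - z) := by
      refine Complex.differentiableAt_Gamma _ fun m hm => ?_
      have := congrArg Complex.re hm
      simp at this
      have : (0 : ℝ) ≤ m := Nat.cast_nonneg m
      linarith
    have g2 := Complex.differentiable_one_div_Gamma (1 / 2 + z)
    exact (g1.comp z (by fun_prop : DifferentiableAt ℂ (fun z : ℂ => 1 / 2 - z) z)).mul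
      (g2.comp z (by fun_prop : DifferentiableAt ℂ (fun z : ℂ => 1 / 2 + z) z))
  · obtain ⟨C₁, hC₁⟩ := Gamma_bounded_on_strip (a := 1 / 2) (b := 1) (by norm_num) (by norm_num)
    obtain ⟨C₂, hC₂⟩ := inv_Gamma_growth 1
    refine ⟨C₁ * C₂, fun z ha hb hi => ?_⟩
    have e1 := hC₁ (1 / 2 - z) (by simp; linarith) (by simp; linarith)
    have e2 := hC₂ (1 / 2 + z) (by simp; linarith) (by simp; linarith) (by simpa using hi)
    have e3 : (1 / 2 + z).im = z.im := by simp
    rw [e3] at e2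
    rw [norm_mul, mul_assoc]
    exact mul_le_mul e1 e2 (norm_nonneg _) ((norm_nonneg _).trans e1)
  · refine ⟨1, fun z hz hi => ?_⟩
    have c : 1 / 2 - z = (starRingEnd ℂ) (1 / 2 + z + 1) := by
      apply Complex.ext <;> simp
      rw [hz]; norm_num
    have hne : 1 / 2 + z ≠ 0 := fun h => by
      have := congrArg Complex.im h
      simp at this
      norm_num [this] at hi
    have hG : Complex.Gamma (1 / 2 + z) ≠ 0 := Complex.Gamma_ne_zero fun m hm => by
      have := congrArg Complex.im hm
      simp at this
      norm_num [this] at hi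
    have hn : ‖(1 / 2 + z : ℂ)‖ = |z.im| := by
      have : (1 / 2 + z : ℂ) = z.im * I := by apply Complex.ext <;> simp [hz]
      rw [this]; simp
    rw [norm_mul, norm_inv, c, norm_Gamma_conj, Complex.Gamma_add_one _ hne, norm_mul,
      mul_assoc, mul_inv_cancel₀ (norm_ne_zero_iff.2 hG), hn]
    simp
  · refine ⟨1, fun z hz hi => ?_⟩
    have c : 1 / 2 - z = (starRingEnd ℂ) (1 / 2 + z) := by
      apply Complex.ext <;> simp [hz]
    have hG : Complex.Gamma (1 / 2 + z) ≠ 0 :=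
      Complex.Gamma_ne_zero_of_re_pos (by simp [hz])
    rw [norm_mul, norm_inv, c, norm_Gamma_conj, mul_inv_cancel₀ (norm_ne_zero_iff.2 hG)]
    simp

/-- For `re w = 1` both moduli are explicit by the reflection formula, with quotient comparable to
`|im w|^(-1/2)`. Passing from `w` to `w + 1` multiplies the quotient by `w / (w + 1/2)`, of modulus
at most `1`. -/
lemma Gamma_quotient_right (n : ℕ) : ∀ w : ℂ, w.re = n + 1 → 1 ≤ |w.im| →
    ‖Complex.Gamma w * (Complex.Gamma (w + 1 / 2))⁻¹‖ ^ 2 ≤ 2 / |w.im| := by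
  induction n with
  | zero =>
    intro w hw hi
    set y : ℂ := w.im * I with hy
    have hwy : w = y + 1 := by apply Complex.ext <;> simp [hy, hw]
    have hyn : ‖y‖ = |w.im| := by simp [hy]
    have hy0 : y ≠ 0 := norm_pos_iff.1 (by linarith)
    have hcy : (starRingEnd ℂ) y = -y := by simp [hy]
    have hpi : ‖(Real.pi : ℂ)‖ = Real.pi := by
      rw [Complex.norm_real, Real.norm_of_nonneg Real.pi_pos.le]
    have a1 : ‖Complex.Gamma w‖ ^ 2 = |w.im| * (Real.pi / ‖Complex.sin (Real.pi * y)‖) := by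
      have e : ‖Complex.Gamma w‖ = ‖Complex.Gamma (1 - y)‖ := by
        rw [← norm_Gamma_conj, hwy]; congr 2; simp [hcy]; ring
      rw [pow_two]
      nth_rewrite 2 [e]
      have e' : Complex.Gamma w = y * Complex.Gamma y := by
        rw [hwy, Complex.Gamma_add_one _ hy0]
      rw [e', norm_mul, mul_assoc, ← norm_mul,
        Complex.Gamma_mul_Gamma_one_sub, norm_div, hpi, hyn]
    have a2 : ‖Complex.Gamma (1 / 2 + y)‖ ^ 2 = Real.pi / ‖Complex.cos (Real.pi * y)‖ := by
      have e : ‖Complex.Gamma (1 / 2 + y)‖ = ‖Complex.Gamma (1 - (1 / 2 + y))‖ := by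
        rw [← norm_Gamma_conj]
        congr 2
        apply Complex.ext <;> simp [hy]
        norm_num
      rw [pow_two]
      nth_rewrite 2 [e]
      rw [← norm_mul, Complex.Gamma_mul_Gamma_one_sub, norm_div, hpi]
      congr 2
      rw [← Complex.cos_pi_div_two_sub, ← Complex.cos_neg]
      congr 1; ring
    have h12 : (1 / 2 + y : ℂ) ≠ 0 := fun h => by
      have := congrArg Complex.re h
      simp [hy] at this
    have hn12 : |w.im| ≤ ‖(1 / 2 + y : ℂ)‖ := by
      have := Complex.abs_im_le_norm (1 / 2 + y)
      simpa [hy] using this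
    have a3 : Complex.Gamma (w + 1 / 2) = (1 / 2 + y) * Complex.Gamma (1 / 2 + y) := by
      rw [← Complex.Gamma_add_one _ h12, hwy]; congr 1; ring
    have hsin : 1 ≤ ‖Complex.sin (Real.pi * y)‖ := by
      have : (Real.pi : ℂ) * y = ((Real.pi * w.im : ℝ) : ℂ) * I := by rw [hy]; push_cast; ring
      rw [this, Complex.sin_mul_I, norm_mul, Complex.norm_I, mul_one, ← Complex.ofReal_sinh,
        Complex.norm_real, Real.norm_eq_abs, Real.abs_sinh, abs_mul, abs_of_pos Real.pi_pos]
      have := Real.self_le_sinh_iff.2 (by positivity : 0 ≤ Real.pi * |w.im|)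
      nlinarith [Real.pi_gt_three]
    have hcos : ‖Complex.cos (Real.pi * y)‖ ≤ 2 * ‖Complex.sin (Real.pi * y)‖ := by
      have e : Complex.cos (Real.pi * y) ^ 2 = 1 - Complex.sin (Real.pi * y) ^ 2 :=
        Complex.cos_sq' _
      have e2 := norm_sub_le (1 : ℂ) (Complex.sin (Real.pi * y) ^ 2)
      rw [← e, norm_pow, norm_pow, norm_one] at e2
      nlinarith [norm_nonneg (Complex.cos (Real.pi * y))]
    have hs0 : 0 < ‖Complex.sin (Real.pi * y)‖ := by linarith
    have hi0 : 0 < |w.im| := by linarith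
    rw [norm_mul, norm_inv, mul_pow, a1, a3, norm_mul, inv_pow, mul_pow, a2]
    have hpp := Real.pi_pos
    calc _ = |w.im| * (‖Complex.cos (Real.pi * y)‖ / ‖Complex.sin (Real.pi * y)‖) /
          ‖(1 / 2 + y : ℂ)‖ ^ 2 := by
          field_simp
      _ ≤ |w.im| * 2 / |w.im| ^ 2 := by
          gcongr
          rwa [div_le_iff₀ hs0]
      _ = _ := by field_simp
  | succ n ih =>
    intro w hw hi
    have hw' : (w - 1).re = n + 1 := by simp [hw]
    have i1 := ih (w - 1) hw' (by simpa using hi)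
    simp only [sub_im, one_im, sub_zero] at i1
    refine le_trans ?_ i1
    have hn : (0 : ℝ) ≤ n := Nat.cast_nonneg n
    have h1 : w - 1 ≠ 0 := fun h => by
      rw [h] at hw'; simp at hw'; linarith
    have h2 : w - 1 + 1 / 2 ≠ 0 := fun h => by
      have := congrArg Complex.re h
      rw [Complex.add_re, hw'] at this
      norm_num at this; linarith
    have e1 : Complex.Gamma w = (w - 1) * Complex.Gamma (w - 1) := by
      rw [← Complex.Gamma_add_one _ h1]; congr 1; ring
    have e2 : Complex.Gamma (w + 1 / 2) = (w - 1 + 1 / 2) * Complex.Gamma (w - 1 + 1 / 2) := by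
      rw [← Complex.Gamma_add_one _ h2]; congr 1; ring
    have e3 : ‖w - 1‖ ≤ ‖w - 1 + 1 / 2‖ := by
      rw [Complex.norm_def, Complex.norm_def]
      refine Real.sqrt_le_sqrt ?_
      rw [Complex.normSq_apply, Complex.normSq_apply, Complex.add_re, Complex.add_im, hw']
      norm_num
      nlinarith
    rw [e1, e2, mul_inv, mul_mul_mul_comm, norm_mul]
    gcongr
    refine mul_le_of_le_one_left (norm_nonneg _) ?_
    rw [norm_mul, norm_inv, ← div_eq_mul_inv]
    exact div_le_one_of_le₀ e3 (norm_nonneg _)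

/-! ### The convexity bound and the decay of the scattering coefficient -/

/-- The entire function `w (w - 1/2) Λ(2w)`, with `Λ` the completed zeta function: the factor
`w (w - 1/2)` cancels the poles of `Λ(2w)`, leaving the constant `1/4`. -/
noncomputable def xiHalf (w : ℂ) : ℂ := w * (w - 1 / 2) * completedRiemannZeta₀ (2 * w) + 1 / 4

lemma xiHalf_symm (w : ℂ) : xiHalf (1 / 2 - w) = xiHalf w := by
  unfold xiHalf
  rw [show 2 * (1 / 2 - w) = 1 - 2 * w by ring, completedRiemannZeta₀_one_sub]
  ring

lemma xiHalf_eq {w : ℂ} (hw : w.im ≠ 0) :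
    xiHalf w = w * (w - 1 / 2) * ((Real.pi : ℂ) ^ (-w) * Complex.Gamma w * riemannZeta (2 * w)) := by
  have h0 : w ≠ 0 := fun h => hw (by simp [h])
  have h1 : w - 1 / 2 ≠ 0 := fun h => hw (by
    have := congrArg Complex.im h
    simpa using this)
  have h1' : (1 - 2 * w) ≠ 0 := fun h => h1 (by linear_combination -h / 2)
  have hG : Complex.Gamma w ≠ 0 := Complex.Gamma_ne_zero fun m hm => hw (by simp [hm])
  have hp : (Real.pi : ℂ) ^ (-w) ≠ 0 := by
    rw [Complex.cpow_ne_zero_iff_of_exponent_ne_zero (neg_ne_zero.2 h0)]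
    exact_mod_cast Real.pi_ne_zero
  have e1 : Complex.Gammaℝ (2 * w) = (Real.pi : ℂ) ^ (-w) * Complex.Gamma w := by
    rw [Complex.Gammaℝ_def]
    congr 2 <;> ring
  rw [riemannZeta_def_of_ne_zero (mul_ne_zero two_ne_zero h0), e1,
    mul_div_cancel₀ _ (mul_ne_zero hp hG), completedRiemannZeta_eq]
  have h2 : completedRiemannZeta₀ (2 * w) - 1 / (2 * w) - 1 / (1 - 2 * w) =
      completedRiemannZeta₀ (2 * w) + 1 / 4 / (w * (w - 1 / 2)) := by
    have h3 : 1 / (2 * w) + 1 / (1 - 2 * w) = -(1 / 4 / (w * (w - 1 / 2))) := by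
      rw [show 1 - 2 * w = -2 * (w - 1 / 2) by ring]
      generalize hv : w - 1 / 2 = v at h1 ⊢
      have hwv : w = v + 1 / 2 := by rw [← hv]; ring
      field_simp
      rw [hwv]
      ring
    linear_combination -h3
  rw [h2, mul_add, mul_div_cancel₀ _ (mul_ne_zero h0 h1), xiHalf]

lemma norm_pi_cpow (w : ℂ) : ‖(Real.pi : ℂ) ^ w‖ = Real.pi ^ w.re :=
  Complex.norm_cpow_eq_rpow_re_of_pos Real.pi_pos w

lemma norm_quadratic_le {n : ℕ} {w : ℂ} (h1 : -(1 / 2) ≤ w.re) (h2 : w.re ≤ n + 1) :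
    ‖w * (w - 1 / 2)‖ ≤ (n + 2) ^ 2 * (1 + |w.im|) ^ (2 : ℝ) := by
  have hn : (0 : ℝ) ≤ n := Nat.cast_nonneg n
  have hi := abs_nonneg w.im
  have e1 : ‖w‖ ≤ (n + 2) * (1 + |w.im|) := by
    have := Complex.norm_le_abs_re_add_abs_im w
    have : |w.re| ≤ n + 1 := abs_le.2 ⟨by linarith, h2⟩
    nlinarith
  have e2 : ‖w - 1 / 2‖ ≤ (n + 2) * (1 + |w.im|) := by
    have := Complex.norm_le_abs_re_add_abs_im (w - 1 / 2)
    have h3 : (w - 1 / 2).re = w.re - 1 / 2 := by simp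
    have h4 : (w - 1 / 2).im = w.im := by simp
    rw [h3, h4] at this
    have : |w.re - 1 / 2| ≤ n + 1 := abs_le.2 ⟨by linarith, by linarith⟩
    nlinarith
  rw [norm_mul, Real.rpow_two, ← mul_pow, pow_two]
  gcongr

/-- Left edge: the functional equation replaces `ζ(2w)` by the bounded `ζ(1 - 2w)`, at the cost of
the quotient `Γ(1/2 - w) / Γ(1/2 + w)`. Right edge: `ζ(2w)` is bounded and `Γ(w) / Γ(w + 1/2)`
decays like `|im w|^(-1/2)`. -/
lemma xiHalf_div_Gamma_bound (n : ℕ) {δ : ℝ} (hδ : 0 < δ) (hδ' : δ ≤ 1 / 2) :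
    ∃ C, 0 < C ∧ ∀ w : ℂ, -δ ≤ w.re → w.re ≤ n + 1 →
      ‖xiHalf w * (Complex.Gamma (w + 1 / 2))⁻¹‖ ≤ C * (1 + |w.im|) ^
        ((2 + 2 * δ) * (1 - (w.re - -δ) / (n + 1 - -δ)) + (3 / 2) * ((w.re - -δ) / (n + 1 - -δ))) := by
  have hn : (0 : ℝ) ≤ n := Nat.cast_nonneg n
  refine three_lines_poly (A := 2 + Real.pi) (by linarith) (by linarith) (by norm_num) ?_ ?_ ?_ ?_
  · intro w _ _
    have g2 := Complex.differentiable_one_div_Gamma (w + 1 / 2)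
    have g1 : DifferentiableAt ℂ (fun w : ℂ => completedRiemannZeta₀ (2 * w)) w :=
      (differentiable_completedZeta₀ (2 * w)).comp w (by fun_prop)
    have g3 : DifferentiableAt ℂ xiHalf w := by
      unfold xiHalf
      fun_prop
    exact g3.mul (DifferentiableAt.comp (g := fun s : ℂ => (Complex.Gamma s)⁻¹) w g2
      (by fun_prop : DifferentiableAt ℂ (fun z : ℂ => z + 1 / 2) w))
  · obtain ⟨B, hB⟩ := completedZeta₀_bounded_on_strip (-1) (2 * (n + 1))
    obtain ⟨C, hC⟩ := inv_Gamma_growth (n + 2)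
    refine ⟨((n + 2) ^ 2 * B + 1) * C, fun w ha hb hi => ?_⟩
    have b1 := hB (2 * w) (by simp; linarith) (by simp; linarith)
    have c1 := hC (w + 1 / 2) (by simp; linarith) (by simp; linarith) (by simpa using hi)
    have e3 : (w + 1 / 2).im = w.im := by simp
    rw [e3] at c1
    have q := norm_quadratic_le (n := n) (by linarith) hb
    have hB0 : 0 ≤ B := (norm_nonneg _).trans b1
    have ex : (1 + |w.im|) ^ (2 : ℝ) ≤ Real.exp (2 * |w.im|) := by
      rw [Real.rpow_two, mul_comm, Real.exp_mul, Real.rpow_two]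
      gcongr
      linarith [Real.add_one_le_exp |w.im|]
    have x1 : ‖xiHalf w‖ ≤ ((n + 2) ^ 2 * B + 1) * Real.exp (2 * |w.im|) := by
      have : ‖xiHalf w‖ ≤ ‖w * (w - 1 / 2) * completedRiemannZeta₀ (2 * w)‖ + ‖(1 / 4 : ℂ)‖ :=
        norm_add_le _ _
      have h4 : ‖(1 / 4 : ℂ)‖ ≤ 1 := by norm_num
      have h5 : 1 ≤ Real.exp (2 * |w.im|) := Real.one_le_exp (by positivity)
      have h6 : ‖w * (w - 1 / 2) * completedRiemannZeta₀ (2 * w)‖ ≤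
          (n + 2) ^ 2 * Real.exp (2 * |w.im|) * B := by
        rw [norm_mul]
        gcongr
        exact q.trans (by gcongr)
      nlinarith
    rw [norm_mul, add_mul 2, Real.exp_add, mul_mul_mul_comm]
    exact mul_le_mul x1 c1 (norm_nonneg _) ((norm_nonneg _).trans x1)
  · obtain ⟨B, hB⟩ := zeta_bounded (σ := 1 + 2 * δ) (by linarith)
    obtain ⟨C, hC⟩ := Gamma_quotient_left hδ.le hδ'
    refine ⟨(n + 2) ^ 2 * Real.pi ^ (-δ - 1 / 2) * B * C, fun w hw hi => ?_⟩
    have hi0 : w.im ≠ 0 := fun h => by norm_num [h] at hi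
    have q := norm_quadratic_le (n := n) (w := w) (by linarith) (by linarith)
    have b := hB (2 * (1 / 2 - w)) (by
      have : (2 * (1 / 2 - w)).re = 1 - 2 * w.re := by simp; ring
      rw [this, hw]; linarith)
    have hB0 : 0 ≤ B := (norm_nonneg _).trans b
    have e : xiHalf w * (Complex.Gamma (w + 1 / 2))⁻¹ = w * (w - 1 / 2) *
        (Real.pi : ℂ) ^ (-(1 / 2 - w)) * riemannZeta (2 * (1 / 2 - w)) *
        (Complex.Gamma (1 / 2 - w) * (Complex.Gamma (1 / 2 + w))⁻¹) := by
      rw [← xiHalf_symm, xiHalf_eq (by simpa using hi0), add_comm w]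
      ring
    have hre : (-(1 / 2 - w)).re = -δ - 1 / 2 := by simp [hw]
    rw [e, norm_mul, norm_mul, norm_mul _ ((Real.pi : ℂ) ^ _), norm_pi_cpow, hre,
      Real.rpow_add (by positivity)]
    calc _ ≤ ((n + 2) ^ 2 * (1 + |w.im|) ^ (2 : ℝ)) * Real.pi ^ (-δ - 1 / 2) * B *
          (C * (1 + |w.im|) ^ (2 * δ)) := by
          have := Real.pi_pos
          gcongr
          exact hC w hw
      _ = _ := by ring
  · obtain ⟨B, hB⟩ := zeta_bounded (σ := 2) (by norm_num)
    refine ⟨(n + 2) ^ 2 * Real.pi ^ (-(n + 1) : ℝ) * B * 2, fun w hw hi => ?_⟩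
    have hi0 : w.im ≠ 0 := fun h => by norm_num [h] at hi
    have q := norm_quadratic_le (n := n) (w := w) (by linarith) (by linarith)
    have b := hB (2 * w) (by simp [hw])
    have hB0 : 0 ≤ B := (norm_nonneg _).trans b
    have e : xiHalf w * (Complex.Gamma (w + 1 / 2))⁻¹ = w * (w - 1 / 2) *
        (Real.pi : ℂ) ^ (-w) * riemannZeta (2 * w) *
        (Complex.Gamma w * (Complex.Gamma (w + 1 / 2))⁻¹) := by
      rw [xiHalf_eq hi0]
      ring
    have g : ‖Complex.Gamma w * (Complex.Gamma (w + 1 / 2))⁻¹‖ ≤ 2 * (1 + |w.im|) ^ (-(1 / 2) : ℝ) := by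
      refine le_of_sq_le_sq ((Gamma_quotient_right n w hw hi).trans ?_) (by positivity)
      rw [mul_pow, ← Real.rpow_natCast ((1 + |w.im|) ^ (-(1 / 2) : ℝ)),
        ← Real.rpow_mul (by positivity)]
      norm_num
      rw [Real.rpow_neg_one, ← div_eq_mul_inv, div_le_div_iff₀ (by linarith) (by positivity)]
      linarith
    have hre : (-w).re = -(n + 1) := by simp [hw]
    rw [e, norm_mul, norm_mul, norm_mul _ ((Real.pi : ℂ) ^ _), norm_pi_cpow, hre,
      show (3 / 2 : ℝ) = 2 + -(1 / 2) by norm_num, Real.rpow_add (by positivity)]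
    calc _ ≤ ((n + 2) ^ 2 * (1 + |w.im|) ^ (2 : ℝ)) * Real.pi ^ (-(n + 1) : ℝ) * B *
          (2 * (1 + |w.im|) ^ (-(1 / 2) : ℝ)) := by
          have := Real.pi_pos
          gcongr
      _ = _ := by ring

/-- Power decay of the scattering coefficient, uniformly for `im l` in a compact subset of
`(0, ∞)`. -/
lemma Smat_power_decay {μ : ℝ} (hμ : 0 < μ) (n : ℕ) (hn : μ ≤ n + 1) :
    ∃ C κ : ℝ, 0 < κ ∧ ∀ l : ℂ, μ ≤ l.im → l.im ≤ n + 1 → 1 ≤ l.re →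
      ‖Smat l‖ ≤ C * (1 + l.re) ^ (-κ) := by
  have hn0 : (0 : ℝ) < n + 1 := by positivity
  -- With this `δ`, interpolation gives exponent at most `2 + 2δ - μ / (2(n+1)) = 2 - 2δ`
  -- as soon as `re w ≥ μ`.
  set δ : ℝ := μ / (8 * (n + 1)) with hδdef
  have hδ : 0 < δ := by positivity
  have hμδ : μ = 8 * δ * (n + 1) := by rw [hδdef]; field_simp
  have hδ' : δ ≤ 1 / 8 := by
    rw [hδdef, div_le_iff₀ (by positivity)]; linarith
  obtain ⟨C, hC0, hC⟩ := xiHalf_div_Gamma_bound n hδ (by linarith)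
  obtain ⟨B, hB⟩ := inv_zeta_bounded (σ := 1 + 2 * μ) (by linarith)
  refine ⟨Real.sqrt Real.pi * Real.pi ^ (n + 1 : ℝ) * (4 * C) * B, 2 * δ, by positivity,
    fun l h1 h2 h3 => ?_⟩
  set w : ℂ := -I * l with hw
  have hre : w.re = l.im := by simp [hw]
  have him : w.im = -l.re := by simp [hw]
  have himabs : |w.im| = l.re := by rw [him, abs_neg, abs_of_nonneg (by linarith)]
  have hi0 : w.im ≠ 0 := by rw [him]; linarith
  have hw0 : w ≠ 0 := fun h => hi0 (by simp [h])
  have hw1 : w - 1 / 2 ≠ 0 := fun h => hi0 (by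
    have := congrArg Complex.im h
    simpa using this)
  have hpi : (Real.pi : ℂ) ≠ 0 := by exact_mod_cast Real.pi_ne_zero
  have e : Smat l = (Real.sqrt Real.pi : ℂ) * (Real.pi : ℂ) ^ w *
      (xiHalf w * (Complex.Gamma (w + 1 / 2))⁻¹ * (w * (w - 1 / 2))⁻¹) *
      (riemannZeta (1 + 2 * w))⁻¹ := by
    unfold Smat
    rw [xiHalf_eq hi0, Complex.cpow_neg, show -2 * I * l = 2 * w by rw [hw]; ring, ← hw,
      show 1 - 2 * I * l = 1 + 2 * w by rw [hw]; ring,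
      show 1 / 2 - I * l = w + 1 / 2 by rw [hw]; ring]
    have hp : (Real.pi : ℂ) ^ w ≠ 0 := by
      rw [Complex.cpow_ne_zero_iff_of_exponent_ne_zero hw0]; exact hpi
    rw [div_eq_mul_inv, mul_inv]
    generalize (riemannZeta (1 + 2 * w))⁻¹ = a
    generalize (Complex.Gamma (w + 1 / 2))⁻¹ = b
    generalize w - 1 / 2 = v at hw1 ⊢
    field_simp
  have hb := hB (1 + 2 * w) (by simp [hre]; linarith)
  have hB0 : 0 ≤ B := (norm_nonneg _).trans hb
  have hF := hC w (by linarith) (by linarith)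
  rw [himabs] at hF
  have hpos : 0 < 1 + l.re := by linarith
  have hF' : ‖xiHalf w * (Complex.Gamma (w + 1 / 2))⁻¹‖ ≤
      C * ((1 + l.re) ^ (2 : ℝ) * (1 + l.re) ^ (-(2 * δ))) := by
    refine hF.trans ?_
    rw [← Real.rpow_add hpos]
    refine mul_le_mul_of_nonneg_left
      (Real.rpow_le_rpow_of_exponent_le (by linarith) ?_) hC0.le
    set θ := (w.re - -δ) / (n + 1 - -δ) with hθ
    have hθ1 : 8 * δ ≤ θ := by
      rw [hθ, le_div_iff₀ (by linarith)]
      nlinarith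
    nlinarith
  have hq : ‖(w * (w - 1 / 2))⁻¹‖ ≤ 4 * ((1 + l.re) ^ (2 : ℝ))⁻¹ := by
    have a1 : l.re ≤ ‖w‖ := himabs ▸ Complex.abs_im_le_norm w
    have a2 : l.re ≤ ‖w - 1 / 2‖ := by
      have := Complex.abs_im_le_norm (w - 1 / 2)
      have h4 : (w - 1 / 2).im = w.im := by simp
      rwa [h4, himabs] at this
    rw [norm_inv, norm_mul, Real.rpow_two, ← div_eq_mul_inv, inv_eq_one_div,
      div_le_div_iff₀ (by nlinarith) (by positivity)]
    have : l.re * l.re ≤ ‖w‖ * ‖w - 1 / 2‖ := mul_le_mul a1 a2 (by linarith) (norm_nonneg _)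
    nlinarith
  have hp2 : Real.pi ^ w.re ≤ Real.pi ^ (n + 1 : ℝ) :=
    Real.rpow_le_rpow_of_exponent_le (by linarith [Real.pi_gt_three]) (by linarith)
  have hne : (1 + l.re) ^ (2 : ℝ) ≠ 0 := by positivity
  rw [e, norm_mul, norm_mul, norm_mul, norm_mul _ (w * (w - 1 / 2))⁻¹, norm_pi_cpow,
    Complex.norm_real, Real.norm_of_nonneg (Real.sqrt_nonneg _)]
  calc _ ≤ Real.sqrt Real.pi * Real.pi ^ (n + 1 : ℝ) *
        ((C * ((1 + l.re) ^ (2 : ℝ) * (1 + l.re) ^ (-(2 * δ)))) *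
          (4 * ((1 + l.re) ^ (2 : ℝ))⁻¹)) * B := by
        have := Real.pi_pos
        gcongr
    _ = _ := by field_simp

theorem stmt2 (ν : ℝ) (hν : 0 < ν) (l : ℕ → ℂ)
    (hre : Tendsto (fun n => (l n).re) atTop atTop)
    (him : Tendsto (fun n => (l n).im) atTop (𝓝 ν)) :
    Tendsto (fun n => Smat (l n)) atTop (𝓝 0) := by
  obtain ⟨N, hN⟩ := exists_nat_gt ν
  obtain ⟨C, κ, hκ, hC⟩ := Smat_power_decay (half_pos hν) N (by linarith)
  have hlim : Tendsto (fun n => C * (1 + (l n).re) ^ (-κ)) atTop (𝓝 0) := by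
    simpa using ((tendsto_rpow_neg_atTop hκ).comp
      (tendsto_atTop_add_const_left atTop (1 : ℝ) hre)).const_mul C
  refine squeeze_zero_norm' ?_ hlim
  filter_upwards [hre.eventually_ge_atTop 1, him.eventually (lt_mem_nhds (half_lt_self hν)),
    him.eventually (gt_mem_nhds (by linarith : ν < N + 1))] with n h1 h2 h3
  exact hC (l n) h2.le h3.le h1
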